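/- Let f(z) = z + Σ_{n≥2} a_n z^n and g(z) = z + Σ_{n≥2} b_n z^n be analytic on the unit disk 𝔻, with f and g nonvanishing on the punctured disk 0 < |z| < 1, and suppose |a_n| ≤ (n+1)/2 and |b_n| ≤ 2/n for all n ≥ 2. Let r₉ ≈ 0.29399 be the unique root in (0,1) of the equation (r − 3)(1 − r) − ((4 − 9r + 3r²)/r)·log(1 − r) = 0. Then the function F(z) = z^3/(f(z)g(z)) satisfies |F'(z)(z/F(z))^2 − 1| < 1 for every z with 0 < |z| < r₉; in particular F belongs to the class 𝒰 in the disk |z| < r₉. -/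

import Mathlib

/-!
Write `f z = z p(z)` and `g z = z q(z)`, so that `F z = z / (p z q z)` and
`F'(z) (z / F z)² = p q - z (p q)'`.  With `p = ∑ aₖ₊₁ zᵏ` and `q = ∑ bₘ₊₁ zᵐ` this is the double
series `∑ (1 - k - m) aₖ₊₁ bₘ₊₁ zᵏ⁺ᵐ`, whose `(0, 0)` term is `1`; hence `U_F` is the sum of the
other terms.  Using the coefficient bounds `Aₖ = (k + 2) / 2` and `Bₘ`, it is majorized termwise by
`(k + m - 1) Aₖ Bₘ ρᵏ⁺ᵐ`, for every `ρ ≥ ‖z‖`, and strictly so at `(1, 1)` if `ρ > ‖z‖`.  The full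
majorant double series (whose `(0, 0)` term is `-1`) sums to `ρ (P Q)' - P Q` with
`P ρ = (2 - ρ) / (2 (1 - ρ)²)` and `Q ρ = -2 log (1 - ρ) / ρ - 1`; the equation defining `r₉` says
precisely that this vanishes at `ρ = r₉`.  So `‖U_F z‖ < 0 + 1` for `‖z‖ < r₉`.

`hasSum_majorant` evaluates the majorant series and `norm_lt_one_of_majorant` makes the comparison.
-/

/-- The sum of a power series whose coefficients grow at most linearly is differentiable in the unit
disk, and the series may be differentiated termwise (here in the form `z ↦ z p'(z)`). -/
lemma powerSeries_deriv (c : ℕ → ℂ) (hc : ∀ n : ℕ, ‖c n‖ ≤ (n : ℝ) + 1) (z : ℂ) (hz : ‖z‖ < 1) :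
    DifferentiableAt ℂ (fun w => ∑' n : ℕ, c n * w ^ n) z ∧
    HasSum (fun n : ℕ => (n : ℂ) * c n * z ^ n)
      (z * deriv (fun w => ∑' n : ℕ, c n * w ^ n) z) := by
  obtain ⟨ρ, h1, h2⟩ := exists_between hz
  have hρ0 : 0 ≤ ρ := (norm_nonneg z).trans h1.le
  have hρ : ‖ρ‖ < 1 := by rwa [Real.norm_of_nonneg hρ0]
  have hu : Summable (fun n : ℕ => ((n : ℝ) + 1) * ρ ^ n) := by
    have := (summable_pow_mul_geometric_of_norm_lt_one 1 hρ).add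
      (summable_geometric_of_norm_lt_one hρ)
    refine this.congr fun n => by ring
  have hzU : z ∈ Metric.ball (0 : ℂ) ρ := by simpa using h1
  have hd : ∀ n : ℕ, DifferentiableOn ℂ (fun w : ℂ => c n * w ^ n) (Metric.ball (0 : ℂ) ρ) :=
    fun n => by fun_prop
  have hle : ∀ (n : ℕ) (w : ℂ), w ∈ Metric.ball (0 : ℂ) ρ →
      ‖c n * w ^ n‖ ≤ ((n : ℝ) + 1) * ρ ^ n := by
    intro n w hw
    have hw' : ‖w‖ ≤ ρ := by simpa using (Metric.mem_ball.1 hw).le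
    rw [norm_mul, norm_pow]
    exact mul_le_mul (hc n) (pow_le_pow_left₀ (norm_nonneg w) hw' n) (by positivity) (by positivity)
  refine ⟨(Complex.differentiableOn_tsum_of_summable_norm hu hd Metric.isOpen_ball hle).differentiableAt
    (Metric.isOpen_ball.mem_nhds hzU), ?_⟩
  have := (Complex.hasSum_deriv_of_summable_norm hu hd Metric.isOpen_ball hle hzU).mul_left z
  refine this.congr_fun ?_
  intro n
  have h : deriv (fun w : ℂ => c n * w ^ n) z = c n * (n * z ^ (n - 1)) := by
    rw [deriv_const_mul _ (by fun_prop)]; simp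
  rw [h]
  rcases n with _ | n
  · simp
  · simp only [Nat.add_sub_cancel]; ring

lemma powerSeries_summable_norm (c : ℕ → ℂ) (hc : ∀ n : ℕ, ‖c n‖ ≤ (n : ℝ) + 1) (z : ℂ)
    (hz : ‖z‖ < 1) :
    Summable (fun n : ℕ => ‖c n * z ^ n‖) ∧ Summable (fun n : ℕ => ‖(n : ℂ) * c n * z ^ n‖) := by
  have hz' : ‖(‖z‖ : ℝ)‖ < 1 := by simpa using hz
  have s0 := summable_geometric_of_norm_lt_one hz'
  have s1 := summable_pow_mul_geometric_of_norm_lt_one 1 hz'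
  have s2 := summable_pow_mul_geometric_of_norm_lt_one 2 hz'
  constructor
  · refine Summable.of_nonneg_of_le (fun _ => norm_nonneg _) (fun n => ?_) (s1.add s0)
    rw [norm_mul, norm_pow]
    calc ‖c n‖ * ‖z‖ ^ n ≤ ((n : ℝ) + 1) * ‖z‖ ^ n := by gcongr; exact hc n
      _ = _ := by ring
  · refine Summable.of_nonneg_of_le (fun _ => norm_nonneg _) (fun n => ?_) (s2.add s1)
    rw [norm_mul, norm_mul, norm_pow, Complex.norm_natCast]
    calc (n : ℝ) * ‖c n‖ * ‖z‖ ^ n ≤ n * ((n : ℝ) + 1) * ‖z‖ ^ n := by gcongr; exact hc n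
      _ = _ := by ring

/-- The operator `h ↦ z h' - h` applied to the product of two series, as a double series. -/
lemma hasSum_double {𝕜 : Type*} [NormedField 𝕜] [CompleteSpace 𝕜] (x y : ℕ → 𝕜) {p p' q q' : 𝕜}
    (hp : HasSum x p) (hp' : HasSum (fun n : ℕ => (n : 𝕜) * x n) p')
    (hq : HasSum y q) (hq' : HasSum (fun n : ℕ => (n : 𝕜) * y n) q')
    (np : Summable fun n => ‖x n‖) (np' : Summable fun n : ℕ => ‖(n : 𝕜) * x n‖)
    (nq : Summable fun n => ‖y n‖) (nq' : Summable fun n : ℕ => ‖(n : 𝕜) * y n‖) :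
    HasSum (fun i : ℕ × ℕ => ((i.1 : 𝕜) + i.2 - 1) * (x i.1 * y i.2)) (p' * q + p * q' - p * q) := by
  have h1 := hp'.mul hq (summable_mul_of_summable_norm (f := fun n : ℕ => (n : 𝕜) * x n) (g := y) np' nq)
  have h2 := hp.mul hq' (summable_mul_of_summable_norm (f := x) (g := fun n : ℕ => (n : 𝕜) * y n) np nq')
  have h3 := hp.mul hq (summable_mul_of_summable_norm (f := x) (g := y) np nq)
  refine ((h1.add h2).sub h3).congr_fun fun i => by ring

/-- The coefficient majorant of `f z / z`. -/
noncomputable def coeffA (k : ℕ) : ℝ := ((k : ℝ) + 2) / 2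

/-- The coefficient majorant of `g z / z`: `1` at index `0` and `2 / (m + 1)` for `m ≥ 1`. -/
noncomputable def coeffB (m : ℕ) : ℝ := 2 / ((m : ℝ) + 1) - if m = 0 then 1 else 0

lemma coeffA_pos (k : ℕ) : 0 < coeffA k := by unfold coeffA; positivity

lemma coeffB_pos (m : ℕ) : 0 < coeffB m := by
  unfold coeffB
  split_ifs with h
  · subst h; norm_num
  · simp only [sub_zero]; positivity

lemma hasSum_majorant (r : ℝ) (h0 : 0 < r) (h1 : r < 1)
    (hroot : (r - 3) * (1 - r) - ((4 - 9 * r + 3 * r ^ 2) / r) * Real.log (1 - r) = 0) :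
    HasSum (fun i : ℕ × ℕ => ((i.1 : ℝ) + i.2 - 1) * ((coeffA i.1 * r ^ i.1) * (coeffB i.2 * r ^ i.2)))
      0 := by
  have hr : ‖r‖ < 1 := by rwa [Real.norm_of_nonneg h0.le]
  have hr1 : 1 - r ≠ 0 := by linarith
  have g0 := hasSum_geometric_of_norm_lt_one hr
  have g1 := hasSum_choose_mul_geometric_of_norm_lt_one 1 hr
  have g2 := hasSum_choose_mul_geometric_of_norm_lt_one 2 hr
  have gl := (Real.hasSum_pow_div_log_of_abs_lt_one (x := r) hr).mul_left (1 / r)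
  have gi : HasSum (fun n : ℕ => if n = 0 then (1 : ℝ) else 0) 1 := hasSum_ite_eq 0 1
  have hP : HasSum (fun k : ℕ => coeffA k * r ^ k) ((1 / (1 - r) ^ 2 + (1 - r)⁻¹) / 2) := by
    refine ((g1.add g0).div_const 2).congr_fun fun k => ?_
    simp only [coeffA, Nat.choose_one_right]; push_cast; ring
  -- `k (k + 2) / 2 = C(k + 2, 2) - (C(k + 1, 1) + 1) / 2`
  have hP' : HasSum (fun k : ℕ => (k : ℝ) * (coeffA k * r ^ k))
      (1 / (1 - r) ^ 3 - (1 / (1 - r) ^ 2 + (1 - r)⁻¹) / 2) := by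
    refine (g2.sub ((g1.add g0).div_const 2)).congr_fun fun k => ?_
    simp only [coeffA, Nat.choose_one_right, Nat.cast_choose_two]; push_cast; ring
  have hQ : HasSum (fun m : ℕ => coeffB m * r ^ m) (2 * (1 / r * -Real.log (1 - r)) - 1) := by
    refine ((gl.mul_left 2).sub gi).congr_fun fun m => ?_
    have : (m : ℝ) + 1 ≠ 0 := by positivity
    rcases m with _ | m
    · simp [coeffB]; field_simp
    · simp only [coeffB]; field_simp; simp; ring
  have hQ' : HasSum (fun m : ℕ => (m : ℝ) * (coeffB m * r ^ m))
      (2 * (1 - r)⁻¹ - 2 * (1 / r * -Real.log (1 - r))) := by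
    refine ((g0.mul_left 2).sub (gl.mul_left 2)).congr_fun fun m => ?_
    have : (m : ℝ) + 1 ≠ 0 := by positivity
    rcases m with _ | m
    · simp; field_simp; simp
    · simp only [coeffB]; field_simp; simp; ring
  have key := hasSum_double _ _ hP hP' hQ hQ' hP.summable.norm hP'.summable.norm
    hQ.summable.norm hQ'.summable.norm
  convert key using 1
  · rfl
  · -- the sum of the double series is `-(1 - r)⁻³` times the left-hand side of `hroot`
    rw [← mul_zero (-(1 / (1 - r) ^ 3)), ← hroot]
    field_simp
    ring

/-- Termwise comparison of the double series for `U_F` with the majorant series at `r > ‖z‖`. -/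
lemma norm_lt_one_of_majorant (p q : ℕ → ℂ) (hp0 : p 0 = 1) (hq0 : q 0 = 1)
    (hp : ∀ n, ‖p n‖ ≤ coeffA n) (hq : ∀ n, ‖q n‖ ≤ coeffB n) (z : ℂ) (r : ℝ) (hz : ‖z‖ < r)
    (hM : HasSum (fun i : ℕ × ℕ =>
      ((i.1 : ℝ) + i.2 - 1) * ((coeffA i.1 * r ^ i.1) * (coeffB i.2 * r ^ i.2))) 0)
    (S : ℂ) (hS : HasSum (fun i : ℕ × ℕ =>
      ((i.1 : ℂ) + i.2 - 1) * ((p i.1 * z ^ i.1) * (q i.2 * z ^ i.2))) S) :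
    ‖-S - 1‖ < 1 := by
  have iR : HasSum (fun i : ℕ × ℕ => if i = 0 then (1 : ℝ) else 0) 1 := hasSum_ite_eq 0 1
  have iC : HasSum (fun i : ℕ × ℕ => if i = 0 then (1 : ℂ) else 0) 1 := hasSum_ite_eq 0 1
  have hM1 := hM.add iR
  have hS1 := hS.add iC
  have hA : ∀ n, ‖p n * z ^ n‖ ≤ coeffA n * r ^ n := fun n => by
    rw [norm_mul, norm_pow]
    exact mul_le_mul (hp n) (pow_le_pow_left₀ (norm_nonneg z) hz.le n) (by positivity)
      (coeffA_pos n).le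
  have hB : ∀ n, ‖q n * z ^ n‖ ≤ coeffB n * r ^ n := fun n => by
    rw [norm_mul, norm_pow]
    exact mul_le_mul (hq n) (pow_le_pow_left₀ (norm_nonneg z) hz.le n) (by positivity)
      (coeffB_pos n).le
  have hle : ∀ i : ℕ × ℕ,
      ‖((i.1 : ℂ) + i.2 - 1) * ((p i.1 * z ^ i.1) * (q i.2 * z ^ i.2)) + if i = 0 then (1 : ℂ) else 0‖
      ≤ ((i.1 : ℝ) + i.2 - 1) * ((coeffA i.1 * r ^ i.1) * (coeffB i.2 * r ^ i.2)) +
        if i = 0 then (1 : ℝ) else 0 := by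
    rintro ⟨k, m⟩
    by_cases h : ((k, m) : ℕ × ℕ) = 0
    · obtain ⟨rfl, rfl⟩ : k = 0 ∧ m = 0 := by simpa using h
      simp [hp0, hq0, coeffA, coeffB]
      norm_num
    · have hkm : (1 : ℝ) ≤ (k : ℝ) + m := by
        have : 1 ≤ k + m := by
          by_contra hc
          exact h (by ext <;> simp <;> omega)
        exact_mod_cast this
      have hn : ‖(k : ℂ) + m - 1‖ = (k : ℝ) + m - 1 := by
        have : (k : ℂ) + m - 1 = (((k : ℝ) + m - 1 : ℝ) : ℂ) := by push_cast; ring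
        rw [this, Complex.norm_real, Real.norm_of_nonneg (by linarith)]
      rw [if_neg h, if_neg h, add_zero, add_zero, norm_mul, norm_mul, hn]
      exact mul_le_mul_of_nonneg_left (mul_le_mul (hA k) (hB m) (norm_nonneg _)
        ((norm_nonneg _).trans (hA k))) (by linarith)
  have hlt : ‖(((1, 1) : ℕ × ℕ).1 + (((1, 1) : ℕ × ℕ).2 : ℂ) - 1) *
        ((p 1 * z ^ 1) * (q 1 * z ^ 1)) + if ((1, 1) : ℕ × ℕ) = 0 then (1 : ℂ) else 0‖
      < (((1, 1) : ℕ × ℕ).1 + (((1, 1) : ℕ × ℕ).2 : ℝ) - 1) *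
        ((coeffA 1 * r ^ 1) * (coeffB 1 * r ^ 1)) + if ((1, 1) : ℕ × ℕ) = 0 then (1 : ℝ) else 0 := by
    have h1 : ‖p 1 * z ^ 1‖ < coeffA 1 * r ^ 1 := by
      rw [norm_mul, norm_pow, pow_one, pow_one]
      exact (mul_le_mul_of_nonneg_right (hp 1) (norm_nonneg z)).trans_lt
        (mul_lt_mul_of_pos_left hz (coeffA_pos 1))
    have h2 : ‖q 1 * z ^ 1‖ < coeffB 1 * r ^ 1 := by
      rw [norm_mul, norm_pow, pow_one, pow_one]
      exact (mul_le_mul_of_nonneg_right (hq 1) (norm_nonneg z)).trans_lt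
        (mul_lt_mul_of_pos_left hz (coeffB_pos 1))
    have h3 : ‖(p 1 * z ^ 1) * (q 1 * z ^ 1)‖ < (coeffA 1 * r ^ 1) * (coeffB 1 * r ^ 1) := by
      rw [norm_mul]
      exact mul_lt_mul'' h1 h2 (norm_nonneg _) (norm_nonneg _)
    simpa using h3
  have hs : Summable (fun i : ℕ × ℕ =>
      ‖((i.1 : ℂ) + i.2 - 1) * ((p i.1 * z ^ i.1) * (q i.2 * z ^ i.2)) +
        if i = 0 then (1 : ℂ) else 0‖) :=
    Summable.of_nonneg_of_le (fun _ => norm_nonneg _) hle hM1.summable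
  have h3 : ‖S + 1‖ ≤ ∑' i : ℕ × ℕ, ‖((i.1 : ℂ) + i.2 - 1) *
      ((p i.1 * z ^ i.1) * (q i.2 * z ^ i.2)) + if i = 0 then (1 : ℂ) else 0‖ := by
    rw [← hS1.tsum_eq]; exact norm_tsum_le_tsum_norm hs
  have h4 := hasSum_lt hle hlt hs.hasSum hM1
  rw [zero_add] at h4
  calc ‖-S - 1‖ = ‖S + 1‖ := by rw [← norm_neg]; congr 1; ring
    _ < 1 := h3.trans_lt h4

lemma eq_mul_tsum (f : ℂ → ℂ) (a : ℕ → ℂ) (ha0 : a 0 = 0)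
    (hf : ∀ z ∈ Metric.ball (0:ℂ) 1, HasSum (fun n : ℕ => a n * z ^ n) (f z))
    (z : ℂ) (hz : ‖z‖ < 1) :
    f z = z * ∑' n : ℕ, a (n + 1) * z ^ n := by
  have h := hf z (by simpa using hz)
  rw [← h.tsum_eq, h.summable.tsum_eq_zero_add, ← tsum_mul_left]
  simp only [ha0, zero_mul, zero_add]
  exact tsum_congr fun n => by ring

theorem radius_univalence_coeff_halfNplusOne_twoDivN
    (f g F : ℂ → ℂ) (a b : ℕ → ℂ)
    (hfa : AnalyticOnNhd ℂ f (Metric.ball (0:ℂ) 1))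
    (hga : AnalyticOnNhd ℂ g (Metric.ball (0:ℂ) 1))
    (ha0 : a 0 = 0) (ha1 : a 1 = 1) (hb0 : b 0 = 0) (hb1 : b 1 = 1)
    (hf : ∀ z ∈ Metric.ball (0:ℂ) 1, HasSum (fun n : ℕ => a n * z ^ n) (f z))
    (hg : ∀ z ∈ Metric.ball (0:ℂ) 1, HasSum (fun n : ℕ => b n * z ^ n) (g z))
    (hfne : ∀ z : ℂ, 0 < ‖z‖ → ‖z‖ < 1 → f z ≠ 0)
    (hgne : ∀ z : ℂ, 0 < ‖z‖ → ‖z‖ < 1 → g z ≠ 0)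
    (hA : ∀ n : ℕ, 2 ≤ n → ‖a n‖ ≤ ((n : ℝ) + 1) / 2)
    (hB : ∀ n : ℕ, 2 ≤ n → ‖b n‖ ≤ 2 / (n : ℝ))
    (r9 : ℝ) (hr9mem : r9 ∈ Set.Ioo (0:ℝ) 1)
    (hr9root : (r9 - 3) * (1 - r9) - ((4 - 9 * r9 + 3 * r9 ^ 2) / r9) * Real.log (1 - r9) = 0)
    (hr9uniq : ∀ r ∈ Set.Ioo (0:ℝ) 1, (r - 3) * (1 - r) - ((4 - 9 * r + 3 * r ^ 2) / r) * Real.log (1 - r) = 0 → r = r9)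
    (hF : ∀ z : ℂ, F z = z ^ 3 / (f z * g z)) :
    ∀ z : ℂ, 0 < ‖z‖ → ‖z‖ < r9 →
      ‖deriv F z * (z / F z) ^ 2 - 1‖ < 1 := by

  have hpA : ∀ n, ‖a (n + 1)‖ ≤ coeffA n := by
    intro n
    rcases n with _ | n
    · simp [ha1, coeffA]
    · refine (hA (n + 1 + 1) (by omega)).trans (le_of_eq ?_)
      simp only [coeffA]; push_cast; ring
  have hqB : ∀ n, ‖b (n + 1)‖ ≤ coeffB n := by
    intro n
    rcases n with _ | n
    · simp [hb1, coeffB]; norm_num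
    · refine (hB (n + 1 + 1) (by omega)).trans (le_of_eq ?_)
      simp [coeffB]
  have hpn : ∀ n : ℕ, ‖a (n + 1)‖ ≤ (n : ℝ) + 1 := fun n => (hpA n).trans (by
    have : (0 : ℝ) ≤ n := n.cast_nonneg
    simp only [coeffA]; linarith)
  have hqn : ∀ n : ℕ, ‖b (n + 1)‖ ≤ (n : ℝ) + 1 := fun n => (hqB n).trans (by
    rcases n with _ | n
    · simp [coeffB]; norm_num
    · simp only [coeffB]
      have : (0 : ℝ) ≤ n := n.cast_nonneg
      rw [if_neg (Nat.succ_ne_zero n), sub_zero]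
      push_cast
      rw [div_le_iff₀ (by positivity)]
      nlinarith)
  intro z hz0 hzr
  have hz1 : ‖z‖ < 1 := hzr.trans hr9mem.2
  have hzne : z ≠ 0 := norm_pos_iff.1 hz0
  have sp := fun w hw => powerSeries_summable_norm (fun n => a (n + 1)) hpn w hw
  have sq := fun w hw => powerSeries_summable_norm (fun n => b (n + 1)) hqn w hw
  have fp := eq_mul_tsum f a ha0 hf
  have gq := eq_mul_tsum g b hb0 hg
  obtain ⟨dp, hp'⟩ := powerSeries_deriv (fun n => a (n + 1)) hpn z hz1
  obtain ⟨dq, hq'⟩ := powerSeries_deriv (fun n => b (n + 1)) hqn z hz1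
  have hp := (sp z hz1).1.of_norm.hasSum
  have hq := (sq z hz1).1.of_norm.hasSum
  set p : ℂ → ℂ := fun w => ∑' n : ℕ, a (n + 1) * w ^ n with hpdef
  set q : ℂ → ℂ := fun w => ∑' n : ℕ, b (n + 1) * w ^ n with hqdef
  have hpz : p z ≠ 0 := fun h => hfne z hz0 hz1 (by rw [fp z hz1]; exact mul_eq_zero_of_right z h)
  have hqz : q z ≠ 0 := fun h => hgne z hz0 hz1 (by rw [gq z hz1]; exact mul_eq_zero_of_right z h)
  have hFpq : ∀ w : ℂ, ‖w‖ < 1 → w ≠ 0 → F w = w / (p w * q w) := by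
    intro w hw hw0
    rw [hF, fp w hw, gq w hw]
    change w ^ 3 / (w * p w * (w * q w)) = w / (p w * q w)
    rw [show w ^ 3 = (w * w) * w by ring, show w * p w * (w * q w) = (w * w) * (p w * q w) by ring,
      mul_div_mul_left _ _ (mul_ne_zero hw0 hw0)]
  have hev : F =ᶠ[nhds z] fun w => w / (p w * q w) := by
    have h1 : ∀ᶠ w in nhds z, ‖w‖ < 1 := continuous_norm.continuousAt.eventually_lt_const hz1
    filter_upwards [h1, eventually_ne_nhds hzne] with w h1 h2 using hFpq w h1 h2
  have hdF : deriv F z = (1 * (p z * q z) - z * (deriv p z * q z + p z * deriv q z)) /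
      (p z * q z) ^ 2 := by
    rw [hev.deriv_eq]
    exact ((hasDerivAt_id z).div (dp.hasDerivAt.mul dq.hasDerivAt) (mul_ne_zero hpz hqz)).deriv
  have hU : deriv F z * (z / F z) ^ 2 - 1 =
      -(z * deriv p z * q z + p z * (z * deriv q z) - p z * q z) - 1 := by
    rw [hdF, hFpq z hz1 hzne]
    field_simp
    ring
  rw [hU]
  refine norm_lt_one_of_majorant (fun n => a (n + 1)) (fun n => b (n + 1)) ha1 hb1 hpA hqB z r9 hzr
    (hasSum_majorant r9 hr9mem.1 hr9mem.2 hr9root) _ ?_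
  exact hasSum_double (fun n => a (n + 1) * z ^ n) (fun n => b (n + 1) * z ^ n) hp
    (by simpa only [mul_assoc] using hp') hq (by simpa only [mul_assoc] using hq')
    (sp z hz1).1 (by simpa only [mul_assoc] using (sp z hz1).2)
    (sq z hz1).1 (by simpa only [mul_assoc] using (sq z hz1).2)
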